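/- arXiv:1710.11609 — 3 statements merged into one kernel-verified Lean document; each statement's English description precedes it below -/
import Mathlib

section
/- Let L : ℂ[x] → ℂ[x] be the linear operator L(p) = p' + 5x⁴·p. For all integers n ≥ 0 and 0 ≤ ν ≤ 4, the polynomial x^{5n+ν} − (−1)ⁿ · ((ν+1)/5)ₙ · x^ν lies in the range of L, where ((ν+1)/5)ₙ = ∏_{j=0}^{n−1} ((ν+1)/5 + j) is the Pochhammer symbol. -/
/-!
Modulo the range of the twisted derivative of `x^d`, the image
`(m + 1) x^m + d x^(m + d)` of `x^(m + 1)` vanishes. If `d a = ν + 1` and `m = d n + ν`, then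
`m + 1 = d (a + n)`, so cancelling `d` gives `x^(m + d) ≡ -(a + n) x^m`: each shift of the exponent
by `d` contributes one factor of `(-1)ⁿ (a)ₙ`.
-/

open Polynomial

/-- The one-variable twisted differential `L(p) = p' + 5x⁴·p` associated to the
potential `x⁵`. -/
noncomputable def Ltw : Polynomial ℂ →ₗ[ℂ] Polynomial ℂ :=
  Polynomial.derivative + LinearMap.mulLeft ℂ (5 * X ^ 4)

/-- The twisted derivative `p ↦ p' + f' p` associated to a potential `f`; formally it is
`e⁻ᶠ ∘ d/dx ∘ eᶠ`, so polynomials congruent modulo its range have the same integrals against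
`eᶠ dx`, up to boundary terms. -/
noncomputable def twistedDerivative {R : Type*} [CommSemiring R] (f : R[X]) : R[X] →ₗ[R] R[X] :=
  derivative + LinearMap.mulLeft R (derivative f)

lemma twistedDerivative_X_pow_X_pow_succ {R : Type*} [CommSemiring R] (d m : ℕ) :
    twistedDerivative (X ^ d : R[X]) (X ^ (m + 1)) =
      ((m : R) + 1) • X ^ m + (d : R) • X ^ (m + d) := by
  rcases d with _ | d
  · simp [twistedDerivative, smul_eq_C_mul]
  · simp only [twistedDerivative, LinearMap.add_apply, LinearMap.mulLeft_apply,
      derivative_X_pow_succ, smul_eq_C_mul, Nat.cast_add, Nat.cast_one]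
    ring

section Reduction

variable {R : Type*} [CommRing R] {d : ℕ} {a : R}

lemma X_pow_add_smodEq_neg_smul_X_pow (hd : IsUnit (d : R)) {m : ℕ}
    (ha : (d : R) * a = m + 1) :
    X ^ (m + d) ≡ -a • X ^ m [SMOD LinearMap.range (twistedDerivative (X ^ d : R[X]))] := by
  rw [SModEq.sub_mem, neg_smul, sub_neg_eq_add, ← Submodule.smul_mem_iff_of_isUnit _ hd]
  refine ⟨X ^ (m + 1), ?_⟩
  rw [twistedDerivative_X_pow_X_pow_succ, ← ha, mul_smul, smul_add, add_comm]

theorem pochhammer_reduction_general (hd : IsUnit (d : R)) {ν : ℕ}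
    (ha : (d : R) * a = ν + 1) (n : ℕ) :
    X ^ (d * n + ν) ≡ ((-1) ^ n * ∏ j ∈ Finset.range n, (a + j)) • X ^ ν
      [SMOD LinearMap.range (twistedDerivative (X ^ d : R[X]))] := by
  induction n with
  | zero => simp
  | succ n ih =>
    have shift : (d : R) * (a + n) = (d * n + ν : ℕ) + 1 := by
      push_cast
      linear_combination ha
    have exponent : d * (n + 1) + ν = d * n + ν + d := by ring
    calc
      X ^ (d * (n + 1) + ν) ≡ -(a + n) • X ^ (d * n + ν)
          [SMOD LinearMap.range (twistedDerivative (X ^ d : R[X]))] := by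
        rw [exponent]
        exact X_pow_add_smodEq_neg_smul_X_pow hd shift
      _ ≡ -(a + n) • ((-1) ^ n * ∏ j ∈ Finset.range n, (a + j)) • X ^ ν
          [SMOD LinearMap.range (twistedDerivative (X ^ d : R[X]))] := ih.smul _
      _ = ((-1) ^ (n + 1) * ∏ j ∈ Finset.range (n + 1), (a + j)) • X ^ ν := by
        rw [smul_smul, Finset.prod_range_succ]
        congr 1
        ring

end Reduction

lemma Ltw_eq_twistedDerivative : Ltw = twistedDerivative (X ^ 5) := by
  rw [Ltw, twistedDerivative, derivative_X_pow, Nat.cast_ofNat, map_ofNat]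

/-- For all `n ≥ 0` and `0 ≤ ν ≤ 4`, the polynomial
`x^{5n+ν} − (−1)ⁿ ((ν+1)/5)ₙ x^ν` lies in the range of `L`, where
`((ν+1)/5)ₙ = ∏_{j<n} ((ν+1)/5 + j)` is the Pochhammer symbol. -/
theorem pochhammer_reduction (n ν : ℕ) (hν : ν ≤ 4) :
    X ^ (5 * n + ν) -
      C ((-1 : ℂ) ^ n * ∏ j ∈ Finset.range n, (((ν : ℂ) + 1) / 5 + (j : ℂ))) * X ^ ν ∈
      LinearMap.range Ltw := by
  rw [Ltw_eq_twistedDerivative, ← smul_eq_C_mul, ← SModEq.sub_mem]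
  exact pochhammer_reduction_general (by norm_num) (by push_cast; ring) n
end

section
/- For i = 1,...,5 let Dᵢ : ℂ[x₁,...,x₅] → ℂ[x₁,...,x₅] be the linear operator Dᵢ(p) = ∂p/∂xᵢ + 5xᵢ⁴·p. Then every polynomial in ℂ[x₁,...,x₅] is congruent, modulo the subspace D₁(ℂ[x]) + ⋯ + D₅(ℂ[x]), to a ℂ-linear combination of the 1024 monomials x^ν with ν ∈ {0,1,2,3}⁵; i.e., these monomials span the quotient ℂ[x₁,...,x₅]/(∑ᵢ Dᵢ(ℂ[x])). -/
/-!
If `xᵢ^d` divides a monomial, write the latter as `x^t xᵢ^d`. Applying `∂ᵢ + a xᵢ^d`, with `a` a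
unit, to `x^t` gives `tᵢ x^(t - eᵢ) + a x^t xᵢ^d`, so modulo the images of these operators the
monomial is a multiple of `x^(t - eᵢ)`, a proper divisor of it unless the coefficient `tᵢ` vanishes.
Divisibility of monomials is well founded, so the reduction ends at monomials divisible by none of
the `xᵢ^d`.
-/

open MvPolynomial

/-- The components `Dᵢ(p) = ∂p/∂xᵢ + 5xᵢ⁴·p` of the twisted differential `D₊ = d + dW₀∧`
for the Fermat quintic `W₀ = x₁⁵+⋯+x₅⁵`. -/
noncomputable def Dtw (i : Fin 5) : MvPolynomial (Fin 5) ℂ →ₗ[ℂ] MvPolynomial (Fin 5) ℂ :=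
  (pderiv i).toLinearMap + LinearMap.mulLeft ℂ (5 * X i ^ 4)

/-- The subspace `V = D₁(ℂ[x]) + ⋯ + D₅(ℂ[x])` of twisted-exact polynomials. -/
noncomputable def Vtw : Submodule ℂ (MvPolynomial (Fin 5) ℂ) :=
  ⨆ i : Fin 5, LinearMap.range (Dtw i)

section CommSemiring

variable {σ R : Type*} [CommSemiring R]

/-- The operator `p ↦ ∂p/∂xᵢ + f p`: for `f = ∂W/∂xᵢ`, the `i`-th component of the twisted
differential `d + dW∧` on top-degree forms. Taking `f` rather than the potential `W` as the
argument allows infinitely many variables. -/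
noncomputable def twistedPDeriv (f : MvPolynomial σ R) (i : σ) :
    MvPolynomial σ R →ₗ[R] MvPolynomial σ R :=
  (pderiv i).toLinearMap + LinearMap.mulLeft R f

/-- The polynomials whose class in the top twisted de Rham cohomology vanishes, i.e. the sum of the
images of the operators `p ↦ ∂p/∂xᵢ + fᵢ p`, where `fᵢ = ∂W/∂xᵢ` for a potential `W`. -/
noncomputable def twistedExact (f : σ → MvPolynomial σ R) : Submodule R (MvPolynomial σ R) :=
  ⨆ i, LinearMap.range (twistedPDeriv (f i) i)

theorem twistedPDeriv_mem_twistedExact (f : σ → MvPolynomial σ R) (i : σ) (p : MvPolynomial σ R) :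
    twistedPDeriv (f i) i p ∈ twistedExact f :=
  Submodule.mem_iSup_of_mem i (LinearMap.mem_range_self _ p)

theorem twistedPDeriv_C_mul_X_pow_monomial (a b : R) (n : ℕ) (i : σ) (t : σ →₀ ℕ) :
    twistedPDeriv (C a * X i ^ n) i (monomial t b) =
      monomial (t - Finsupp.single i 1) (b * t i) + monomial (t + Finsupp.single i n) (a * b) := by
  simp only [twistedPDeriv, LinearMap.add_apply, LinearMap.mulLeft_apply, Derivation.coeFn_coe,
    pderiv_monomial, C_mul_X_pow_eq_monomial, monomial_mul, add_comm t]

theorem prod_univ_X_pow_eq_monomial [Fintype σ] (s : σ →₀ ℕ) :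
    ∏ i, X i ^ s i = monomial s (1 : R) := by
  rw [monomial_eq, C_1, one_mul, Finsupp.prod_fintype _ _ fun i ↦ pow_zero (X i)]

theorem restrictSupport_forall_lt_eq_span_range [Fintype σ] (d : σ → ℕ) :
    restrictSupport R {s | ∀ i, s i < d i} =
      Submodule.span R (Set.range fun ν : ∀ i, Fin (d i) ↦ ∏ i, X i ^ (ν i : ℕ)) := by
  rw [restrictSupport_eq_span]
  congr 1
  ext q
  constructor
  · rintro ⟨s, hs, rfl⟩
    exact ⟨fun i ↦ ⟨s i, hs i⟩, prod_univ_X_pow_eq_monomial s⟩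
  · rintro ⟨ν, rfl⟩
    exact ⟨Finsupp.equivFunOnFinite.symm fun i ↦ ν i, fun i ↦ (ν i).isLt,
      (prod_univ_X_pow_eq_monomial _).symm⟩

end CommSemiring

section CommRing

variable {σ R : Type*} [CommRing R] {a : σ → R}

theorem monomial_mem_restrictSupport_sup_twistedExact (ha : ∀ i, IsUnit (a i))
    (d : σ → ℕ) (s : σ →₀ ℕ) (b : R) :
    monomial s b ∈ restrictSupport R {s | ∀ i, s i < d i} ⊔
      twistedExact fun i ↦ C (a i) * X i ^ d i := by
  set N := restrictSupport R {s | ∀ i, s i < d i} ⊔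
    twistedExact fun i ↦ C (a i) * X i ^ d i
  induction s using WellFoundedLT.induction generalizing b with
  | ind s ih =>
    by_cases hs : ∀ i, s i < d i
    · exact Submodule.mem_sup_left ((monomial_mem_restrictSupport R).2 (.inl hs))
    push Not at hs
    obtain ⟨i, hi⟩ := hs
    obtain ⟨t, rfl⟩ := exists_add_of_le (Finsupp.single_le_iff.2 hi)
    rw [add_comm] at ih ⊢
    obtain ⟨b, rfl⟩ := (ha i).dvd (a := b)
    have image_mem : twistedPDeriv (C (a i) * X i ^ d i) i (monomial t b) ∈ N :=
      Submodule.mem_sup_right (twistedPDeriv_mem_twistedExact (fun i ↦ C (a i) * X i ^ d i) i _)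
    have lower_mem : monomial (t - Finsupp.single i 1) (b * t i) ∈ N := by
      by_cases hti : t i = 0
      · simp [hti]
      · have sub_lt : t - Finsupp.single i 1 < t := by
          refine tsub_le_self.lt_of_ne fun h ↦ ?_
          have hi_eq : t i - 1 = t i := by simpa using DFunLike.congr_fun h i
          lia
        exact ih _ (sub_lt.trans_le le_self_add) _
    rwa [twistedPDeriv_C_mul_X_pow_monomial, Submodule.add_mem_iff_right _ lower_mem] at image_mem

theorem codisjoint_restrictSupport_twistedExact (ha : ∀ i, IsUnit (a i)) (d : σ → ℕ) :
    Codisjoint (restrictSupport R {s | ∀ i, s i < d i})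
      (twistedExact fun i ↦ C (a i) * X i ^ d i) := by
  refine codisjoint_iff.2 (Submodule.eq_top_iff'.2 fun p ↦ ?_)
  rw [p.as_sum]
  exact Submodule.sum_mem _ fun s _ ↦ monomial_mem_restrictSupport_sup_twistedExact ha d s _

theorem monomials_span_twisted_cohomology_general [Fintype σ] [DecidableEq σ]
    (ha : ∀ i, IsUnit (a i)) (d : σ → ℕ) (p : MvPolynomial σ R) :
    ∃ c : (∀ i, Fin (d i)) → R,
      p - ∑ ν : ∀ i, Fin (d i), C (c ν) * ∏ i, X i ^ (ν i : ℕ) ∈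
        twistedExact fun i ↦ C (a i) * X i ^ d i := by
  obtain ⟨q, v, hq, hv, rfl⟩ := Submodule.codisjoint_iff_exists_add_eq.1
    (codisjoint_restrictSupport_twistedExact ha d) p
  rw [restrictSupport_forall_lt_eq_span_range] at hq
  obtain ⟨c, rfl⟩ := (Submodule.mem_span_range_iff_exists_fun R).1 hq
  exact ⟨c, by simpa only [C_mul', add_sub_cancel_left] using hv⟩

end CommRing

theorem Vtw_eq_twistedExact : Vtw = twistedExact fun i ↦ C 5 * X i ^ 4 := by
  simp only [Vtw, Dtw, twistedExact, twistedPDeriv, map_ofNat]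

/-- Every polynomial in `ℂ[x₁,…,x₅]` is congruent, modulo `V = ∑ᵢ Dᵢ(ℂ[x])`, to a
`ℂ`-linear combination of the `1024` monomials `x^ν`, `ν ∈ {0,1,2,3}⁵`; i.e. these
monomials span the quotient `ℂ[x₁,…,x₅]/V`. -/
theorem monomials_span_twisted_cohomology (p : MvPolynomial (Fin 5) ℂ) :
    ∃ c : (Fin 5 → Fin 4) → ℂ,
      p - ∑ ν : Fin 5 → Fin 4, C (c ν) * ∏ i, X i ^ (ν i : ℕ) ∈ Vtw := by
  rw [Vtw_eq_twistedExact]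
  exact monomials_span_twisted_cohomology_general (fun _ ↦ IsUnit.mk0 5 (by norm_num)) (fun _ ↦ 4) p
end

section
/- Let a, b ∈ ℝ with sin(π(a+b)) ≠ 0, sin(πa) ≠ 0 and sin(πb) ≠ 0, and define B ∈ M₂(ℂ) by B = (1/(i·sin(π(a+b)))) · [[cos(π(a−b)) − e^{iπ(a+b)}, 2 sin(πa) sin(πb)], [2 e^{2πi(a+b)} sin(πa) sin(πb), e^{iπ(a+b)}(e^{2πia} + e^{2πib} − 2)/2]]. Then for real numbers c₁, c₂, the Hermitian form c₁|z₁|² + c₂|z₂|² on ℂ² is invariant under z ↦ Bz (equivalently Bᴴ·diag(c₁,c₂)·B = diag(c₁,c₂)) if and only if c₂ = −c₁. -/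
/-!
Put `s = sin π(a+b)`, `S = 2 sin πa sin πb` and `τ = i S / s`. The addition formulas give
`B = diag(-1, e^{2πi(a+b)}) · (1 + τ N)` with `N = (1, -1)ᵀ (1, 1)`. The diagonal factor is unitary,
so it preserves every diagonal form `D = diag(c₁, c₂)`. Since `τ` is purely imaginary, `1 + τ N`
changes `D` by `τ (D N - Nᴴ D) - τ² Nᴴ D N`. Both `D N - Nᴴ D` and `Nᴴ D N` are multiples of
`c₁ + c₂`, and the upper left entry of the change is `-(c₁ + c₂) τ²`, where `τ ≠ 0`.
-/

open Complex Real Matrix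

/-- The monodromy matrix `B` around `z = ∞` acting on the hypergeometric solutions
`F₁, F₂`. -/
noncomputable def Bmon (a b : ℝ) : Matrix (Fin 2) (Fin 2) ℂ :=
  (1 / (Complex.I * (Real.sin (π * (a + b)) : ℂ))) •
    !![(Real.cos (π * (a - b)) : ℂ) - Complex.exp (Complex.I * π * (a + b)),
        2 * (Real.sin (π * a) : ℂ) * (Real.sin (π * b) : ℂ);
      2 * Complex.exp (2 * π * Complex.I * (a + b)) *
          (Real.sin (π * a) : ℂ) * (Real.sin (π * b) : ℂ),
        Complex.exp (π * Complex.I * (a + b)) *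
          (Complex.exp (2 * π * Complex.I * a) + Complex.exp (2 * π * Complex.I * b) - 2) / 2]

section Trigonometry

variable (x y : ℂ)

lemma cos_sub_sub_exp_add_mul_I :
    Complex.cos (x - y) - Complex.exp ((x + y) * I) =
      2 * Complex.sin x * Complex.sin y - Complex.sin (x + y) * I := by
  rw [Complex.exp_mul_I, Complex.cos_sub, Complex.cos_add]
  ring

lemma exp_two_mul_I_add_exp_two_mul_I :
    Complex.exp (2 * x * I) + Complex.exp (2 * y * I) =
      2 * Complex.exp ((x + y) * I) * Complex.cos (x - y) := by
  calc Complex.exp (2 * x * I) + Complex.exp (2 * y * I)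
    _ = Complex.exp ((x + y) * I) * (Complex.exp ((x - y) * I) + Complex.exp (-(x - y) * I)) := by
        rw [mul_add, ← Complex.exp_add, ← Complex.exp_add]
        ring_nf
    _ = 2 * Complex.exp ((x + y) * I) * Complex.cos (x - y) := by
        rw [← Complex.two_cos]
        ring

lemma exp_add_mul_I_mul_exp_add_exp_sub_two :
    Complex.exp ((x + y) * I) * (Complex.exp (2 * x * I) + Complex.exp (2 * y * I) - 2) / 2 =
      Complex.exp (2 * (x + y) * I) *
        (2 * Complex.sin x * Complex.sin y + Complex.sin (x + y) * I) := by
  have h_reflect : Complex.cos (x - y) - Complex.exp (-((x + y) * I)) =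
      2 * Complex.sin x * Complex.sin y + Complex.sin (x + y) * I := by
    have h := cos_sub_sub_exp_add_mul_I (-x) (-y)
    rw [← neg_sub', ← neg_add] at h
    simpa only [Complex.cos_neg, Complex.sin_neg, neg_mul, mul_neg, neg_neg, sub_neg_eq_add] using h
  have h_double : Complex.exp (2 * (x + y) * I) = Complex.exp ((x + y) * I) ^ 2 := by
    rw [← Complex.exp_nat_mul, Nat.cast_ofNat, mul_assoc]
  rw [exp_two_mul_I_add_exp_two_mul_I, ← h_reflect, h_double, Complex.exp_neg]
  field_simp [Complex.exp_ne_zero]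

lemma star_exp_ofReal_mul_I_mul_self (θ : ℝ) :
    star (Complex.exp (θ * I)) * Complex.exp (θ * I) = 1 := by
  rw [star_def, conj_mul', norm_exp_ofReal_mul_I, ofReal_one, one_pow]

end Trigonometry

section InvariantForms

variable {m n R : Type*} [Fintype n]

lemma conjTranspose_mul_mul_of_isometry [NonUnitalSemiring R] [StarRing R] {V D : Matrix n n R}
    (hV : Vᴴ * D * V = D) (M : Matrix n m R) : (V * M)ᴴ * D * (V * M) = Mᴴ * D * M := by
  calc (V * M)ᴴ * D * (V * M) = Mᴴ * (Vᴴ * D * V) * M := by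
        simp only [conjTranspose_mul, Matrix.mul_assoc]
    _ = Mᴴ * D * M := by rw [hV]

lemma diagonal_conj_diagonal [DecidableEq n] [CommSemiring R] [StarRing R] {v : n → R}
    (hv : ∀ i, star (v i) * v i = 1) (d : n → R) :
    (diagonal v)ᴴ * diagonal d * diagonal v = diagonal d := by
  rw [diagonal_conjTranspose, diagonal_mul_diagonal, diagonal_mul_diagonal]
  congr 1 with i
  rw [Pi.star_apply, mul_right_comm, hv, one_mul]

end InvariantForms

section NullTransvection

variable {R : Type*} [CommRing R]

/-- The matrix `1 + τ (1, -1)ᵀ (1, 1)`, the transvection of parameter `τ` along the vector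
`(1, -1)`, which is isotropic for the form `|z₁|² - |z₂|²`. -/
def nullTransvection (τ : R) : Matrix (Fin 2) (Fin 2) R :=
  !![1 + τ, τ; -τ, 1 - τ]

lemma conjTranspose_nullTransvection [StarRing R] {τ : R} (hτ : star τ = -τ) :
    (nullTransvection τ)ᴴ = !![1 - τ, τ; -τ, 1 + τ] := by
  ext i j
  fin_cases i <;> fin_cases j <;> simp [nullTransvection, hτ, sub_eq_add_neg]

lemma nullTransvection_conj_diagonal_sub [StarRing R] {τ : R} (hτ : star τ = -τ) (c₁ c₂ : R) :
    (nullTransvection τ)ᴴ * diagonal ![c₁, c₂] * nullTransvection τ - diagonal ![c₁, c₂] =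
      (c₁ + c₂) • !![-τ ^ 2, τ - τ ^ 2; -τ - τ ^ 2, -τ ^ 2] := by
  rw [conjTranspose_nullTransvection hτ, nullTransvection, diagonal_vec2, mul_fin_two, mul_fin_two]
  ext i j
  fin_cases i <;> fin_cases j <;>
    simp only [Fin.zero_eta, Fin.mk_one, Matrix.sub_apply, Matrix.smul_apply, of_apply, cons_val',
      cons_val_zero, cons_val_one, cons_val_fin_one, smul_eq_mul] <;>
    ring

lemma nullTransvection_conj_diagonal_eq_iff [StarRing R] [NoZeroDivisors R] {τ : R}
    (hτ : star τ = -τ) (hτ₀ : τ ≠ 0) (c₁ c₂ : R) :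
    (nullTransvection τ)ᴴ * diagonal ![c₁, c₂] * nullTransvection τ = diagonal ![c₁, c₂] ↔
      c₂ = -c₁ := by
  rw [← sub_eq_zero, nullTransvection_conj_diagonal_sub hτ, eq_neg_iff_add_eq_zero, add_comm c₂]
  refine ⟨fun h ↦ ?_, fun h ↦ by rw [h, zero_smul]⟩
  have h_entry : (c₁ + c₂) * -τ ^ 2 = 0 := congrFun₂ h 0 0
  exact (mul_eq_zero.mp h_entry).resolve_right (neg_ne_zero.mpr (pow_ne_zero 2 hτ₀))

end NullTransvection

section Monodromy

variable {a b : ℝ}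

/-- The parameter `2i sin πa sin πb / sin π(a+b)` of the transvection factor of `Bmon a b`. -/
noncomputable def monodromyShear (a b : ℝ) : ℂ :=
  (2 * Real.sin (π * a) * Real.sin (π * b) / Real.sin (π * (a + b)) : ℝ) * I

lemma star_monodromyShear (a b : ℝ) : star (monodromyShear a b) = -monodromyShear a b := by
  rw [monodromyShear, star_mul', star_def, conj_ofReal, conj_I, mul_neg]

lemma monodromyShear_ne_zero (hab : Real.sin (π * (a + b)) ≠ 0) (ha : Real.sin (π * a) ≠ 0)
    (hb : Real.sin (π * b) ≠ 0) : monodromyShear a b ≠ 0 :=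
  mul_ne_zero (ofReal_ne_zero.mpr (div_ne_zero (mul_ne_zero (mul_ne_zero two_ne_zero ha) hb) hab))
    I_ne_zero

lemma Bmon_eq_smul (a b : ℝ) :
    Bmon a b = (1 / (I * Complex.sin (π * a + π * b))) •
      !![2 * Complex.sin (π * a) * Complex.sin (π * b) - Complex.sin (π * a + π * b) * I,
          2 * Complex.sin (π * a) * Complex.sin (π * b);
        Complex.exp (2 * (π * a + π * b) * I) * (2 * Complex.sin (π * a) * Complex.sin (π * b)),
          Complex.exp (2 * (π * a + π * b) * I) *
            (2 * Complex.sin (π * a) * Complex.sin (π * b) + Complex.sin (π * a + π * b) * I)] := by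
  rw [← cos_sub_sub_exp_add_mul_I, ← exp_add_mul_I_mul_exp_add_exp_sub_two, Bmon]
  push_cast
  ring_nf

lemma smul_eq_diagonal_mul_nullTransvection {s : ℂ} (hs : s ≠ 0) (S u : ℂ) :
    (1 / (I * s)) • !![S - s * I, S; u * S, u * (S + s * I)] =
      diagonal ![-1, u] * nullTransvection (S / s * I) := by
  have h_inv : 1 / (I * s) = -(s⁻¹ * I) := by
    rw [one_div, _root_.mul_inv_rev, inv_I, mul_neg]
  rw [h_inv, diagonal_vec2, nullTransvection, mul_fin_two]
  ext i j
  fin_cases i <;> fin_cases j <;>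
    simp only [Fin.zero_eta, Fin.mk_one, Matrix.smul_apply, of_apply, cons_val', cons_val_zero,
      cons_val_one, cons_val_fin_one, smul_eq_mul] <;>
    grind [I_mul_I]

lemma Bmon_eq_diagonal_mul_nullTransvection (hab : Real.sin (π * (a + b)) ≠ 0) :
    Bmon a b = diagonal ![-1, Complex.exp (2 * (π * a + π * b) * I)] *
      nullTransvection (monodromyShear a b) := by
  have hs : Complex.sin (π * a + π * b) ≠ 0 := by
    rw [← mul_add]
    exact_mod_cast hab
  rw [Bmon_eq_smul, smul_eq_diagonal_mul_nullTransvection hs, monodromyShear, mul_add π a b]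
  push_cast
  rfl

lemma Bmon_conj_diagonal (hab : Real.sin (π * (a + b)) ≠ 0) (d : Fin 2 → ℂ) :
    (Bmon a b)ᴴ * diagonal d * Bmon a b =
      (nullTransvection (monodromyShear a b))ᴴ * diagonal d *
        nullTransvection (monodromyShear a b) := by
  rw [Bmon_eq_diagonal_mul_nullTransvection hab]
  refine conjTranspose_mul_mul_of_isometry (diagonal_conj_diagonal ?_ d) _
  refine Fin.forall_fin_two.mpr ⟨by simp, ?_⟩
  exact_mod_cast star_exp_ofReal_mul_I_mul_self (2 * (π * a + π * b))

theorem monodromy_invariant_form_iff_general (a b : ℝ) (hab : Real.sin (π * (a + b)) ≠ 0)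
    (ha : Real.sin (π * a) ≠ 0) (hb : Real.sin (π * b) ≠ 0) (c₁ c₂ : ℂ) :
    (Bmon a b)ᴴ * !![c₁, 0; 0, c₂] * Bmon a b = !![c₁, 0; 0, c₂] ↔ c₂ = -c₁ := by
  rw [← diagonal_vec2, Bmon_conj_diagonal hab]
  exact nullTransvection_conj_diagonal_eq_iff (star_monodromyShear a b)
    (monodromyShear_ne_zero hab ha hb) c₁ c₂

end Monodromy

/-- The Hermitian form `c₁|z₁|² + c₂|z₂|²` is invariant under the hypergeometric
monodromy matrix `B` if and only if `c₂ = −c₁`. -/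
theorem monodromy_invariant_form_iff (a b : ℝ) (hab : Real.sin (π * (a + b)) ≠ 0)
    (ha : Real.sin (π * a) ≠ 0) (hb : Real.sin (π * b) ≠ 0) (c₁ c₂ : ℝ) :
    (Bmon a b)ᴴ * !![(c₁ : ℂ), 0; 0, (c₂ : ℂ)] * Bmon a b = !![(c₁ : ℂ), 0; 0, (c₂ : ℂ)]
      ↔ c₂ = -c₁ := by
  rw [monodromy_invariant_form_iff_general a b hab ha hb]
  norm_cast
end
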